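/- Let SG_n be the star graph on n vertices with uniform edge weight w>0 on all edges, let c denote the center vertex and x,y two distinct leaves. Then for any q>0: U_q(c,x) = q(q + (n−1)w) / ( (q+w)(q+nw) ) and U_q(x,y) = q( q² + (n+2)wq + 2(n−1)w² ) / ( (q+w)²(q+nw) ). In particular both q ↦ U_q(c,x) and q ↦ U_q(x,y) are strictly concave on (0,∞). -/

import Mathlib

open Classical Finset Filter

noncomputable section

variable {V : Type*} [Fintype V] [DecidableEq V]

/-- One step of following the parent map of a rooted forest. -/
def fstep (f : V → Option V) : Option V → Option V := fun o => o.bind f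

/-- `f : V → Option V` encodes a spanning rooted forest structure: every vertex either is a
root (`f x = none`) or points to its parent, and iterating the parent map from any vertex
eventually reaches a root (i.e. there are no cycles). -/
def IsForest (f : V → Option V) : Prop :=
  ∀ x : V, ∃ n : ℕ, (fstep f)^[n] (some x) = none

/-- `f` is a spanning rooted forest of the directed graph with edge relation `E`:
all its (parent-pointing) edges are edges of the graph. -/
def IsRForest (E : V → V → Prop) (f : V → Option V) : Prop :=
  IsForest f ∧ ∀ x y : V, f x = some y → E x y

/-- The number of roots (equivalently, of trees) of a rooted forest. -/
def nRoots (f : V → Option V) : ℕ := (univ.filter fun x : V => f x = none).card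

/-- The weight `w(F) = ∏_{e ∈ F} w(e)` of a rooted forest. -/
def fWeight (w : V → V → ℝ) (f : V → Option V) : ℝ :=
  ∏ x : V, (f x).elim 1 (fun y => w x y)

/-- Non-normalised forest measure of a set `H` of forests: `∑_{F ∈ H} q^{r(F)} w(F)`,
the sum running over spanning rooted forests of the graph belonging to `H`. -/
def fMeasure (E : V → V → Prop) (w : V → V → ℝ) (q : ℝ) (H : Set (V → Option V)) : ℝ :=
  ∑ f ∈ univ.filter (fun f : V → Option V => IsRForest E f ∧ f ∈ H),
    q ^ nRoots f * fWeight w f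

/-- Partition function `Z(q) = ∑_F q^{r(F)} w(F)`. -/
def Zf (E : V → V → Prop) (w : V → V → ℝ) (q : ℝ) : ℝ := fMeasure E w q Set.univ

/-- Probability `P(Φ_q ∈ H)` for the random spanning rooted forest `Φ_q`. -/
def fProb (E : V → V → Prop) (w : V → V → ℝ) (q : ℝ) (H : Set (V → Option V)) : ℝ :=
  fMeasure E w q H / Zf E w q

/-- Ancestor relation in the forest `f`. -/
def anc (f : V → Option V) : V → V → Prop :=
  Relation.ReflTransGen (fun a b => f a = some b)

/-- `x` and `y` belong to the same tree of the forest `f` (they have a common ancestor). -/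
def SameTree (f : V → Option V) (x y : V) : Prop := ∃ z, anc f x z ∧ anc f y z

/-- Two-point correlation `U_q(x,y)`: the probability that `x` and `y` lie in
different trees of `Φ_q`. -/
def Ucorr (E : V → V → Prop) (w : V → V → ℝ) (q : ℝ) (x y : V) : ℝ :=
  fProb E w q {f | ¬ SameTree f x y}

end

noncomputable section

/-- The star graph on `n` vertices (realised on `Fin n`): the centre is the vertex with
label `0`, adjacent to the `n-1` leaves. -/
def starAdj (n : ℕ) : Fin n → Fin n → Prop := fun i j =>
  i ≠ j ∧ ((i : ℕ) = 0 ∨ (j : ℕ) = 0)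

/-!
In a rooted forest on the star with centre `c`, every leaf is a root or points to `c`, and `c` is
a root or points to a leaf, which must then be a root. Once the parent of `c` is fixed the
remaining leaves choose independently, each with total weight `q + w`, or `w` if the leaf is to lie
in the tree of `c`. Hence, on `N` vertices, the tree of `c` contains a given set of `m` leaves with
probability
`(w / (q + w)) ^ m * ((m + 1) q + N w) / (q + N w)`.
Both correlations are complements of such events: `c` and `x` share a tree when `x` is in the tree
of `c`, and two leaves share a tree exactly when both are in the tree of `c`.

For `1 ≤ m ≤ N - 1` this probability is `(q + N w)⁻¹` times a nonnegative combination of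
`(q + w)⁻¹ ^ (m - 1)` and `(q + w)⁻¹ ^ m`; a product of positive decreasing convex functions of `q`,
one of them strictly convex, is strictly convex.
-/

section RootedForest

variable {V : Type*} {f : V → Option V} {x y z : V}

theorem anc.eq_of_eq_none (h : anc f x y) (hx : f x = none) : x = y :=
  (Relation.ReflTransGen.cases_head h).resolve_right fun ⟨_, hz, _⟩ => by simp [hx] at hz

theorem SameTree.symm (h : SameTree f x y) : SameTree f y x :=
  let ⟨r, hx, hy⟩ := h
  ⟨r, hy, hx⟩

theorem SameTree.trans (hxy : SameTree f x y) (hyz : SameTree f y z) : SameTree f x z := by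
  obtain ⟨r, hxr, hyr⟩ := hxy
  obtain ⟨s, hys, hzs⟩ := hyz
  have parent_unique : Relator.RightUnique fun a b => f a = some b :=
    fun _ _ _ h h' => Option.some.inj (h.symm.trans h')
  rcases Relation.ReflTransGen.total_of_right_unique parent_unique hyr hys with hrs | hsr
  · exact ⟨s, Relation.ReflTransGen.trans hxr hrs, hzs⟩
  · exact ⟨r, hxr, Relation.ReflTransGen.trans hzs hsr⟩

theorem SameTree.of_eq_some (h : f x = some y) : SameTree f x y :=
  ⟨y, .single h, .refl⟩

theorem SameTree.eq_of_eq_none (h : SameTree f x y) (hx : f x = none) (hy : f y = none) :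
    x = y :=
  let ⟨_, hxr, hyr⟩ := h
  (hxr.eq_of_eq_none hx).trans (hyr.eq_of_eq_none hy).symm

theorem IsForest.ne_some_of_eq_some (hf : IsForest f) (h : f x = some y) : f y ≠ some x := by
  intro h'
  obtain ⟨n, hn⟩ := hf x
  have hcycle : Set.MapsTo (fstep f) {some x, some y} {some x, some y} := by
    rintro _ (rfl | rfl) <;> simp [fstep, h, h']
  simpa [hn] using hcycle.iterate n (Set.mem_insert (some x) _)

theorem isForest_const_none : IsForest fun _ : V => none :=
  fun _ => ⟨1, rfl⟩

end RootedForest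

section ForestMeasure

variable {V : Type*} [Fintype V]

theorem fWeight_nonneg {w : V → V → ℝ} {f : V → Option V}
    (hw : ∀ x y, f x = some y → 0 ≤ w x y) : 0 ≤ fWeight w f := by
  refine Finset.prod_nonneg fun x _ => ?_
  rcases h : f x with _ | y
  · exact zero_le_one
  · exact hw x y h

theorem pow_nRoots_mul_fWeight (w : V → V → ℝ) (q : ℝ) (f : V → Option V) :
    q ^ nRoots f * fWeight w f = ∏ v, (f v).elim q (w v) := by
  rw [nRoots, fWeight, ← Finset.prod_const, Finset.prod_filter, ← Finset.prod_mul_distrib]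
  refine Finset.prod_congr rfl fun v _ => ?_
  cases f v <;> simp

variable [DecidableEq V] {E : V → V → Prop} {w : V → V → ℝ} {q : ℝ}

theorem Zf_pos (hq : 0 < q) (hw : ∀ x y, E x y → 0 ≤ w x y) : 0 < Zf E w q := by
  refine Finset.sum_pos' (fun f hf => ?_) ⟨fun _ => none, ?_, ?_⟩
  · obtain ⟨-, hE⟩ : IsRForest E f := by simpa using hf
    exact mul_nonneg (by positivity) (fWeight_nonneg fun x y h => hw x y (hE x y h))
  · simp [IsRForest, isForest_const_none]
  · simpa [fWeight] using pow_pos hq _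

theorem fProb_congr {H H' : Set (V → Option V)}
    (h : ∀ f, IsRForest E f → (f ∈ H ↔ f ∈ H')) : fProb E w q H = fProb E w q H' := by
  simp only [fProb, fMeasure]
  congr 2
  exact Finset.filter_congr fun f _ => and_congr_right (h f)

theorem fMeasure_add_fMeasure_compl (E : V → V → Prop) (w : V → V → ℝ) (q : ℝ)
    (H : Set (V → Option V)) : fMeasure E w q H + fMeasure E w q Hᶜ = Zf E w q := by
  simp only [Zf, fMeasure, Finset.sum_filter, ← Finset.sum_add_distrib]
  refine Finset.sum_congr rfl fun f _ => ?_
  by_cases hE : IsRForest E f <;> by_cases hH : f ∈ H <;> simp [hE, hH]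

theorem fProb_compl (hZ : Zf E w q ≠ 0) (H : Set (V → Option V)) :
    fProb E w q Hᶜ = 1 - fProb E w q H := by
  rw [fProb, fProb, eq_sub_iff_add_eq', ← add_div, fMeasure_add_fMeasure_compl, div_self hZ]

theorem Ucorr_eq_one_sub_fProb (hZ : Zf E w q ≠ 0) (x y : V) :
    Ucorr E w q x y = 1 - fProb E w q {f | SameTree f x y} :=
  fProb_compl hZ _

theorem Ucorr_eq_one_sub_fProb_singleton (hZ : Zf E w q ≠ 0) (x y : V) :
    Ucorr E w q x y = 1 - fProb E w q {f | ∀ v ∈ ({y} : Finset V), SameTree f x v} := by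
  simpa using Ucorr_eq_one_sub_fProb hZ x y

end ForestMeasure

section Convexity

theorem strictConvexOn_mul_convexOn {𝕜 E : Type*} [CommRing 𝕜] [LinearOrder 𝕜]
    [IsStrictOrderedRing 𝕜] [AddCommGroup E] [Module 𝕜 E] {s : Set E} {f g : E → 𝕜}
    (hf : StrictConvexOn 𝕜 s f) (hg : ConvexOn 𝕜 s g) (hf₀ : ∀ x ∈ s, 0 ≤ f x)
    (hg₀ : ∀ x ∈ s, 0 < g x) (hfg : MonovaryOn f g s) :
    StrictConvexOn 𝕜 s fun x => f x * g x := by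
  refine ⟨hf.1, fun x hx y hy hxy a b ha hb hab => ?_⟩
  have rearrangement : f x * g y + f y * g x ≤ f x * g x + f y * g y :=
    hfg.smul_add_smul_le_smul_add_smul hx hy
  calc f (a • x + b • y) * g (a • x + b • y)
      < (a * f x + b * f y) * g (a • x + b • y) :=
        mul_lt_mul_of_pos_right (hf.2 hx hy hxy ha hb hab) (hg₀ _ (hf.1 hx hy ha.le hb.le hab))
    _ ≤ (a * f x + b * f y) * (a * g x + b * g y) :=
        mul_le_mul_of_nonneg_left (hg.2 hx hy ha.le hb.le hab) <|
          add_nonneg (mul_nonneg ha.le (hf₀ x hx)) (mul_nonneg hb.le (hf₀ y hy))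
    _ = a * a * (f x * g x) + b * b * (f y * g y) + a * b * (f x * g y + f y * g x) := by ring
    _ ≤ a * a * (f x * g x) + b * b * (f y * g y) + a * b * (f x * g x + f y * g y) := by
        gcongr
    _ = a * (a + b) * (f x * g x) + b * (a + b) * (f y * g y) := by ring
    _ = a • (f x * g x) + b • (f y * g y) := by simp [hab]

theorem strictConvexOn_inv_add (t : ℝ) : StrictConvexOn ℝ (Set.Ioi (-t)) fun p => (p + t)⁻¹ := by
  simpa [Function.comp_def] using
    (strictConvexOn_zpow (m := -1) (by norm_num) (by norm_num)).translate_left t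

theorem convexOn_inv_add_pow (s : ℝ) (k : ℕ) :
    ConvexOn ℝ (Set.Ioi (-s)) fun p => ((p + s) ^ k)⁻¹ := by
  simpa [Function.comp_def] using (convexOn_zpow (𝕜 := ℝ) (-k)).translate_left s

theorem strictConvexOn_inv_add_mul_inv_add_pow {s t a b : ℝ} (hs : 0 ≤ s) (ht : 0 ≤ t)
    (ha : 0 < a) (hb : 0 ≤ b) (j k : ℕ) :
    StrictConvexOn ℝ (Set.Ioi 0)
      fun p => (p + t)⁻¹ * (a * ((p + s) ^ j)⁻¹ + b * ((p + s) ^ k)⁻¹) := by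
  have Ioi_subset {r : ℝ} (hr : 0 ≤ r) : Set.Ioi (0 : ℝ) ⊆ Set.Ioi (-r) :=
    Set.Ioi_subset_Ioi (neg_nonpos.2 hr)
  have monovary : MonovaryOn (fun p => (p + t)⁻¹)
      (fun p => a * ((p + s) ^ j)⁻¹ + b * ((p + s) ^ k)⁻¹) (Set.Ioi 0) := by
    refine AntitoneOn.monovaryOn (fun p hp r _ hpr => ?_) (fun p hp r _ hpr => ?_)
    all_goals
      have hp : 0 < p := hp
      gcongr
  have convex_s (i : ℕ) : ConvexOn ℝ (Set.Ioi 0) fun p : ℝ => ((p + s) ^ i)⁻¹ :=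
    (convexOn_inv_add_pow s i).subset (Ioi_subset hs) (convex_Ioi 0)
  refine strictConvexOn_mul_convexOn
    ((strictConvexOn_inv_add t).subset (Ioi_subset ht) (convex_Ioi 0))
    (((convex_s j).smul ha.le).add ((convex_s k).smul hb)) (fun p hp => ?_) (fun p hp => ?_)
    monovary
  all_goals
    have hp : 0 < p := hp
    positivity

end Convexity

section StarForest

open SimpleGraph (starGraph starGraph_adj)

variable {V : Type*} {c : V} {f : V → Option V} {v x y : V}

theorem isRForest_starGraph_iff :
    IsRForest (starGraph c).Adj f ↔
      f c ≠ some c ∧ ∀ v ≠ c, f v = none ∨ f v = some c ∧ f c ≠ some v := by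
  constructor
  · rintro ⟨hf, hE⟩
    refine ⟨fun h => hf.ne_some_of_eq_some h h, fun v hv => ?_⟩
    rcases h : f v with _ | u
    · exact .inl rfl
    · obtain rfl : u = c := (starGraph_adj.1 (hE v u h)).2.resolve_left hv
      exact .inr ⟨rfl, hf.ne_some_of_eq_some h⟩
  · rintro ⟨hc, hleaf⟩
    have center_reaches_root : ∃ n, (fstep f)^[n] (some c) = none := by
      rcases h : f c with _ | z
      · exact ⟨1, h⟩
      · have hz : f z = none :=
          (hleaf z (by rintro rfl; exact hc h)).resolve_right fun hz => hz.2 h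
        exact ⟨2, by simp [fstep, h, hz]⟩
    refine ⟨fun v => ?_, fun v u h => starGraph_adj.2 ?_⟩
    · rcases eq_or_ne v c with rfl | hv
      · exact center_reaches_root
      · rcases hleaf v hv with h | ⟨h, -⟩
        · exact ⟨1, h⟩
        · obtain ⟨n, hn⟩ := center_reaches_root
          exact ⟨n + 1, by simpa [fstep, h] using hn⟩
    · rcases eq_or_ne v c with rfl | hv
      · exact ⟨by rintro rfl; exact hc h, .inl rfl⟩
      · rcases hleaf v hv with h' | ⟨h', -⟩
        · simp [h] at h'
        · obtain rfl : u = c := Option.some.inj (h.symm.trans h')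
          exact ⟨hv, .inr rfl⟩

theorem sameTree_center_leaf_iff (hf : IsRForest (starGraph c).Adj f) (hv : v ≠ c) :
    SameTree f c v ↔ f v = some c ∨ f c = some v := by
  obtain ⟨hc, hleaf⟩ := isRForest_starGraph_iff.1 hf
  refine ⟨fun h => ?_, fun h => h.elim (fun h => (SameTree.of_eq_some h).symm) .of_eq_some⟩
  refine or_iff_not_imp_left.2 fun hvc => ?_
  have hv₀ : f v = none := (hleaf v hv).resolve_right fun h' => hvc h'.1
  rcases hcz : f c with _ | z
  · exact absurd (h.symm.eq_of_eq_none hv₀ hcz) hv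
  · have hz₀ : f z = none :=
      (hleaf z (by rintro rfl; exact hc hcz)).resolve_right fun hz => hz.2 hcz
    rw [((SameTree.of_eq_some hcz).symm.trans h).eq_of_eq_none hz₀ hv₀]

theorem sameTree_leaf_leaf_iff (hf : IsRForest (starGraph c).Adj f) (hx : x ≠ c) (hy : y ≠ c)
    (hxy : x ≠ y) : SameTree f x y ↔ SameTree f c x ∧ SameTree f c y := by
  refine ⟨fun h => ?_, fun ⟨hcx, hcy⟩ => hcx.symm.trans hcy⟩
  have hleaf := (isRForest_starGraph_iff.1 hf).2
  rcases hleaf x hx with hx₀ | ⟨hxc, -⟩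
  · rcases hleaf y hy with hy₀ | ⟨hyc, -⟩
    · exact absurd (h.eq_of_eq_none hx₀ hy₀) hxy
    · have hcy := (SameTree.of_eq_some hyc).symm
      exact ⟨hcy.trans h.symm, hcy⟩
  · have hcx := (SameTree.of_eq_some hxc).symm
    exact ⟨hcx, hcx.trans h⟩

variable [DecidableEq V]

/-- The values a star forest `f` with centre `c` may take at `v` when `f c = o` and every vertex
of `A` is to lie in the tree of `c`. These constraints on different vertices are independent of
each other. -/
def starParents (c : V) (A : Finset V) (o : Option V) (v : V) : Finset (Option V) :=
  if v = c then {o}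
  else if o = some v then {none}
  else if v ∈ A then {some c} else {none, some c}

/-- The total weight of the possible parents (`none` for a root) of a leaf `v` of the star with
centre `c`, when `v` is not itself the parent of `c` and, if it belongs to `A`, has to lie in the
tree of `c`. -/
def starLeafWeight (w : V → V → ℝ) (q : ℝ) (c : V) (A : Finset V) (v : V) : ℝ :=
  if v ∈ A then w v c else q + w v c

variable [Fintype V] {A : Finset V} {o : Option V}

theorem mem_piFinset_starParents (hA : c ∉ A) (ho : o ≠ some c) :
    f ∈ Fintype.piFinset (starParents c A o) ↔
      (IsRForest (starGraph c).Adj f ∧ ∀ v ∈ A, SameTree f c v) ∧ f c = o := by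
  have ne_center : ∀ v ∈ A, v ≠ c := fun v hv => ne_of_mem_of_not_mem hv hA
  have sameTree_iff : IsRForest (starGraph c).Adj f →
      ((∀ v ∈ A, SameTree f c v) ↔ ∀ v ∈ A, f v = some c ∨ f c = some v) := fun hf =>
    forall₂_congr fun v hv => sameTree_center_leaf_iff hf (ne_center v hv)
  rw [and_congr_right sameTree_iff, isRForest_starGraph_iff, Fintype.mem_piFinset]
  constructor
  · intro h
    obtain rfl : f c = o := by simpa [starParents] using h c
    refine ⟨⟨⟨ho, fun v hv => ?_⟩, fun v hv => ?_⟩, rfl⟩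
    · have := h v
      simp only [starParents, hv, if_false] at this
      split_ifs at this <;> simp_all
    · have := h v
      simp only [starParents, ne_center v hv, hv, if_true, if_false] at this
      split_ifs at this <;> simp_all
  · rintro ⟨⟨⟨-, hleaf⟩, hS⟩, rfl⟩ v
    by_cases hv : v = c
    · simp [starParents, hv]
    · have := hleaf v hv
      have := hS v
      simp only [starParents, hv, if_false]
      split_ifs <;> simp_all

theorem fMeasure_starGraph_eq_sum_prod (hA : c ∉ A) (w : V → V → ℝ) (q : ℝ) :
    fMeasure (starGraph c).Adj w q {f | ∀ v ∈ A, SameTree f c v} =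
      ∑ o ∈ univ.erase (some c), ∏ v, ∑ p ∈ starParents c A o v, p.elim q (w v) := by
  rw [fMeasure, ← Finset.sum_fiberwise_of_maps_to (g := fun f => f c) fun f hf => by
    have hf : IsRForest (starGraph c).Adj f := (by simpa using hf : _ ∧ _).1
    exact Finset.mem_erase.2 ⟨(isRForest_starGraph_iff.1 hf).1, Finset.mem_univ _⟩]
  refine Finset.sum_congr rfl fun o ho => ?_
  rw [Finset.prod_univ_sum]
  refine Finset.sum_congr ?_ fun f _ => pow_nRoots_mul_fWeight w q f
  ext f
  rw [mem_piFinset_starParents hA (Finset.ne_of_mem_erase ho)]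
  simp

theorem prod_sum_starParents (w : V → V → ℝ) (q : ℝ) (c : V) (A : Finset V) (o : Option V) :
    ∏ v, ∑ p ∈ starParents c A o v, p.elim q (w v) =
      o.elim q (w c) *
        ∏ v ∈ {c}ᶜ, if o = some v then q else starLeafWeight w q c A v := by
  rw [Fintype.prod_eq_mul_prod_compl c]
  congr 1
  · simp [starParents]
  · refine Finset.prod_congr rfl fun v hv => ?_
    have hvc : v ≠ c := by simpa using hv
    simp only [starParents, starLeafWeight, hvc, if_false]
    split_ifs <;> simp

/-- The two terms account for the forests rooted at the centre and for those in which the centre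
points to a leaf `z`, which is then a root. -/
theorem fMeasure_starGraph (hA : c ∉ A) (w : V → V → ℝ) (q : ℝ) :
    fMeasure (starGraph c).Adj w q {f | ∀ v ∈ A, SameTree f c v} =
      q * (∏ v ∈ {c}ᶜ, starLeafWeight w q c A v +
        ∑ z ∈ {c}ᶜ, w c z * ∏ v ∈ ({c}ᶜ : Finset V).erase z, starLeafWeight w q c A v) := by
  have options_erase :
      (univ : Finset (Option V)).erase (some c) = insertNone ({c}ᶜ : Finset V) := by
    ext o
    cases o <;> simp
  simp only [fMeasure_starGraph_eq_sum_prod hA, prod_sum_starParents, options_erase,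
    Finset.sum_insertNone, mul_add, Finset.mul_sum, Option.elim_none, Option.elim_some,
    reduceCtorEq, if_false]
  congr 1
  refine Finset.sum_congr rfl fun z hz => ?_
  have off_z : ∀ v ∈ ({c}ᶜ : Finset V).erase z,
      (if some z = some v then q else starLeafWeight w q c A v) = starLeafWeight w q c A v :=
    fun v hv => if_neg fun h => Finset.ne_of_mem_erase hv (Option.some.inj h).symm
  rw [← Finset.mul_prod_erase _ _ hz, Finset.prod_congr rfl off_z, if_pos rfl, mul_left_comm]

theorem fMeasure_starGraph_eq_mul (hA : c ∉ A) {w : V → V → ℝ} {q : ℝ}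
    (hb : ∀ v ≠ c, starLeafWeight w q c A v ≠ 0) :
    fMeasure (starGraph c).Adj w q {f | ∀ v ∈ A, SameTree f c v} =
      q * ((∏ v ∈ {c}ᶜ, starLeafWeight w q c A v) *
        (1 + ∑ z ∈ {c}ᶜ, w c z / starLeafWeight w q c A z)) := by
  rw [fMeasure_starGraph hA, mul_one_add, Finset.mul_sum]
  congr 2
  refine Finset.sum_congr rfl fun z hz => ?_
  rw [← Finset.mul_prod_erase _ _ hz]
  field_simp [hb z (by simpa using hz)]

theorem prod_starLeafWeight_const (hA : c ∉ A) (w q : ℝ) :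
    ∏ v ∈ {c}ᶜ, starLeafWeight (fun _ _ => w) q c A v =
      w ^ #A * (q + w) ^ #({c}ᶜ \ A) := by
  have hA' : A ⊆ {c}ᶜ := Finset.subset_compl_singleton.2 hA
  simp only [starLeafWeight, Finset.prod_ite, Finset.prod_const, Finset.filter_mem_eq_inter,
    Finset.filter_notMem_eq_sdiff, Finset.inter_eq_right.2 hA']

theorem sum_div_starLeafWeight_const (hA : c ∉ A) {w : ℝ} (hw : w ≠ 0) (q : ℝ) :
    ∑ v ∈ {c}ᶜ, w / starLeafWeight (fun _ _ => w) q c A v =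
      #A + #({c}ᶜ \ A) * (w / (q + w)) := by
  have hA' : A ⊆ {c}ᶜ := Finset.subset_compl_singleton.2 hA
  simp only [starLeafWeight, apply_ite (w / ·), Finset.sum_ite, Finset.sum_const,
    Finset.filter_mem_eq_inter, Finset.filter_notMem_eq_sdiff, Finset.inter_eq_right.2 hA',
    div_self hw, nsmul_eq_mul, mul_one]

theorem fProb_starGraph_const (hA : c ∉ A) {w q : ℝ} (hw : 0 < w) (hq : 0 < q) :
    fProb (starGraph c).Adj (fun _ _ => w) q {f | ∀ v ∈ A, SameTree f c v} =
      (w / (q + w)) ^ #A *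
        (((#A + 1) * q + Fintype.card V * w) / (q + Fintype.card V * w)) := by
  have weight_ne_zero (B : Finset V) (v : V) : starLeafWeight (fun _ _ => w) q c B v ≠ 0 := by
    rw [starLeafWeight]
    split_ifs <;> positivity
  have fMeasure_eq {B : Finset V} (hB : c ∉ B) :
      fMeasure (starGraph c).Adj (fun _ _ => w) q {f | ∀ v ∈ B, SameTree f c v} =
        q * (w ^ #B * (q + w) ^ #({c}ᶜ \ B) * (1 + (#B + #({c}ᶜ \ B) * (w / (q + w))))) := by
    rw [fMeasure_starGraph_eq_mul hB fun v _ => weight_ne_zero B v,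
      prod_starLeafWeight_const hB, sum_div_starLeafWeight_const hB hw.ne']
  have card_sdiff : #({c}ᶜ \ A) + #A = #({c}ᶜ : Finset V) :=
    Finset.card_sdiff_add_card_eq_card (Finset.subset_compl_singleton.2 hA)
  have card_V : (Fintype.card V : ℝ) = #({c}ᶜ \ A) + #A + 1 := by
    rw [← Finset.card_add_card_compl {c}, ← card_sdiff]
    push_cast [Finset.card_singleton]
    ring
  have Zf_eq : Zf (starGraph c).Adj (fun _ _ => w) q =
      q * ((q + w) ^ #({c}ᶜ : Finset V) * (1 + #({c}ᶜ : Finset V) * (w / (q + w)))) := by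
    simpa [Zf] using fMeasure_eq (Finset.notMem_empty c)
  rw [fProb, fMeasure_eq hA, Zf_eq, ← card_sdiff, card_V, pow_add, div_pow]
  push_cast
  field_simp
  ring

theorem strictConvexOn_fProb_starGraph_const (hA : c ∉ A) (hA₀ : A.Nonempty) {w : ℝ}
    (hw : 0 < w) :
    StrictConvexOn ℝ (Set.Ioi 0) fun q =>
      fProb (starGraph c).Adj (fun _ _ => w) q {f | ∀ v ∈ A, SameTree f c v} := by
  obtain ⟨k, hk⟩ : ∃ k, #A = k + 1 := Nat.exists_eq_add_one.2 hA₀.card_pos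
  have card_le : (#A : ℝ) + 1 ≤ Fintype.card V := by
    exact_mod_cast (Finset.card_lt_univ_of_notMem hA)
  have coeff_nonneg : 0 ≤ w ^ #A * ((Fintype.card V - (#A + 1)) * w) :=
    mul_nonneg (by positivity) (mul_nonneg (sub_nonneg.2 card_le) hw.le)
  -- With `N` vertices and `m = #A`, write `(m + 1) q + N w = (m + 1) (q + w) + (N - m - 1) w`.
  refine (strictConvexOn_inv_add_mul_inv_add_pow (s := w) (t := Fintype.card V * w)
    (a := w ^ #A * (#A + 1)) hw.le (by positivity) (by positivity) coeff_nonneg k #A).congr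
    fun q hq => ?_
  have hq : 0 < q := hq
  simp only [fProb_starGraph_const hA hw hq, hk, div_pow]
  push_cast
  field_simp
  ring

theorem Ucorr_starGraph_leaf_leaf (hx : x ≠ c) (hy : y ≠ c) (hxy : x ≠ y) {w : V → V → ℝ}
    {q : ℝ} (hZ : Zf (starGraph c).Adj w q ≠ 0) :
    Ucorr (starGraph c).Adj w q x y =
      1 - fProb (starGraph c).Adj w q {f | ∀ v ∈ ({x, y} : Finset V), SameTree f c v} := by
  rw [Ucorr_eq_one_sub_fProb hZ]
  congr 1
  exact fProb_congr fun f hf => by simpa using sameTree_leaf_leaf_iff hf hx hy hxy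

variable {w q : ℝ}

theorem Ucorr_starGraph_const_center_leaf (hw : 0 < w) (hq : 0 < q) (hx : x ≠ c) :
    Ucorr (starGraph c).Adj (fun _ _ => w) q c x =
      q * (q + (Fintype.card V - 1) * w) / ((q + w) * (q + Fintype.card V * w)) := by
  rw [Ucorr_eq_one_sub_fProb_singleton (Zf_pos hq fun _ _ _ => hw.le).ne',
    fProb_starGraph_const (by simpa using hx.symm) hw hq, Finset.card_singleton]
  push_cast
  field_simp
  ring

theorem Ucorr_starGraph_const_leaf_leaf (hw : 0 < w) (hq : 0 < q) (hx : x ≠ c) (hy : y ≠ c)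
    (hxy : x ≠ y) :
    Ucorr (starGraph c).Adj (fun _ _ => w) q x y =
      q * (q ^ 2 + (Fintype.card V + 2) * w * q + 2 * (Fintype.card V - 1) * w ^ 2) /
        ((q + w) ^ 2 * (q + Fintype.card V * w)) := by
  rw [Ucorr_starGraph_leaf_leaf hx hy hxy (Zf_pos hq fun _ _ _ => hw.le).ne',
    fProb_starGraph_const (by simp [hx.symm, hy.symm]) hw hq, Finset.card_pair hxy]
  push_cast
  field_simp
  ring

theorem strictConcaveOn_Ucorr_starGraph_const_center_leaf (hw : 0 < w) (hx : x ≠ c) :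
    StrictConcaveOn ℝ (Set.Ioi 0) fun q => Ucorr (starGraph c).Adj (fun _ _ => w) q c x :=
  ((concaveOn_const 1 (convex_Ioi 0)).sub_strictConvexOn
    (strictConvexOn_fProb_starGraph_const (by simpa using hx.symm)
      (Finset.singleton_nonempty x) hw)).congr
    fun _ hq =>
      (Ucorr_eq_one_sub_fProb_singleton (Zf_pos hq fun _ _ _ => hw.le).ne' c x).symm

theorem strictConcaveOn_Ucorr_starGraph_const_leaf_leaf (hw : 0 < w) (hx : x ≠ c) (hy : y ≠ c)
    (hxy : x ≠ y) :
    StrictConcaveOn ℝ (Set.Ioi 0) fun q => Ucorr (starGraph c).Adj (fun _ _ => w) q x y :=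
  ((concaveOn_const 1 (convex_Ioi 0)).sub_strictConvexOn
    (strictConvexOn_fProb_starGraph_const (by simp [hx.symm, hy.symm])
      (Finset.insert_nonempty x {y}) hw)).congr
    fun _ hq => (Ucorr_starGraph_leaf_leaf hx hy hxy (Zf_pos hq fun _ _ _ => hw.le).ne').symm

theorem star_two_point_general (hw : 0 < w) (hq : 0 < q) (hx : x ≠ c) (hy : y ≠ c)
    (hxy : x ≠ y) :
    Ucorr (starGraph c).Adj (fun _ _ => w) q c x =
      q * (q + (Fintype.card V - 1) * w) / ((q + w) * (q + Fintype.card V * w)) ∧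
    Ucorr (starGraph c).Adj (fun _ _ => w) q x y =
      q * (q ^ 2 + (Fintype.card V + 2) * w * q + 2 * (Fintype.card V - 1) * w ^ 2) /
        ((q + w) ^ 2 * (q + Fintype.card V * w)) ∧
    StrictConcaveOn ℝ (Set.Ioi 0) (fun p => Ucorr (starGraph c).Adj (fun _ _ => w) p c x) ∧
    StrictConcaveOn ℝ (Set.Ioi 0) (fun p => Ucorr (starGraph c).Adj (fun _ _ => w) p x y) :=
  ⟨Ucorr_starGraph_const_center_leaf hw hq hx,
    Ucorr_starGraph_const_leaf_leaf hw hq hx hy hxy,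
    strictConcaveOn_Ucorr_starGraph_const_center_leaf hw hx,
    strictConcaveOn_Ucorr_starGraph_const_leaf_leaf hw hx hy hxy⟩

theorem starAdj_eq_starGraph_adj {n : ℕ} {c : Fin n} (hc : (c : ℕ) = 0) :
    starAdj n = (starGraph c).Adj := by
  funext i j
  simp [starAdj, Fin.ext_iff, hc]

end StarForest

/-- **Two-point correlations on the homogeneous star graph.** For the star graph `SG_n`
with uniform edge weight `w > 0`, centre `c` and distinct leaves `x, y`, and `q > 0`:
`U_q(c,x) = q(q+(n-1)w)/((q+w)(q+nw))`,
`U_q(x,y) = q(q²+(n+2)wq+2(n-1)w²)/((q+w)²(q+nw))`,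
and both maps `q ↦ U_q(c,x)`, `q ↦ U_q(x,y)` are strictly concave on `(0,∞)`. -/
theorem star_two_point (n : ℕ) (w q : ℝ) (hw : 0 < w) (hq : 0 < q)
    (c x y : Fin n) (hc : (c : ℕ) = 0) (hx : (x : ℕ) ≠ 0) (hy : (y : ℕ) ≠ 0)
    (hxy : x ≠ y) :
    Ucorr (starAdj n) (fun _ _ => w) q c x =
      q * (q + ((n : ℝ) - 1) * w) / ((q + w) * (q + (n : ℝ) * w)) ∧
    Ucorr (starAdj n) (fun _ _ => w) q x y =
      q * (q ^ 2 + ((n : ℝ) + 2) * w * q + 2 * ((n : ℝ) - 1) * w ^ 2) /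
        ((q + w) ^ 2 * (q + (n : ℝ) * w)) ∧
    StrictConcaveOn ℝ (Set.Ioi (0 : ℝ)) (fun p => Ucorr (starAdj n) (fun _ _ => w) p c x) ∧
    StrictConcaveOn ℝ (Set.Ioi (0 : ℝ))
      (fun p => Ucorr (starAdj n) (fun _ _ => w) p x y) := by
  have hxc : x ≠ c := fun h => hx (h ▸ hc)
  have hyc : y ≠ c := fun h => hy (h ▸ hc)
  simpa [starAdj_eq_starGraph_adj hc] using star_two_point_general hw hq hxc hyc hxy

end
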